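/- For every integer n ≥ 1: (i) for every x ∈ Ω_n one has ω_n(x) ∈ Ω_n; (ii) Ω_n = {σ^k(ω_n(x)) : x ∈ Ω_n, k ∈ ℤ^2}, i.e. the substitution ω_n is onto up to a shift and the Wang shift Ω_n is self-similar; and (iii) ω_n is recognizable in Ω_n: if x, x' ∈ Ω_n and k, k' ∈ ℤ^2 satisfy σ^k(ω_n(x)) = σ^{k'}(ω_n(x')), where coordinatewise 0 ≤ k < (width of ω_n(x(0,0)), height of ω_n(x(0,0))) and 0 ≤ k' < (width of ω_n(x'(0,0)), height of ω_n(x'(0,0))), then x = x' and k = k'. -/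

import Mathlib

structure WangTile (C : Type*) where
  right : C
  top : C
  left : C
  bottom : C
deriving DecidableEq

abbrev Lbl : Type := ℤ × ℤ × ℤ

def Vn (n : ℤ) : Set Lbl :=
  {v | 0 ≤ v.1 ∧ v.1 ≤ v.2.1 ∧ v.2.1 ≤ 1 ∧ v.2.1 ≤ v.2.2 ∧ v.2.2 ≤ n + 1}

def hatT {C : Type*} (t : WangTile C) : WangTile C :=
  ⟨t.top, t.right, t.bottom, t.left⟩

def whiteTiles (n : ℤ) : Set (WangTile Lbl) :=
  {t | ∃ i j : ℤ, 1 ≤ i ∧ i ≤ n ∧ 1 ≤ j ∧ j ≤ n ∧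
    t = ⟨(1, 1, i + 1), (1, 1, j + 1), (1, 1, i), (1, 1, j)⟩}

def blueH (n : ℤ) : Set (WangTile Lbl) :=
  {t | ∃ i : ℤ, 0 ≤ i ∧ i ≤ n ∧ t = ⟨(0, 0, i + 1), (1, 1, 1), (0, 0, i), (1, 1, n)⟩}

def greenH (n : ℤ) : Set (WangTile Lbl) :=
  {t | ∃ i : ℤ, 0 ≤ i ∧ i ≤ n ∧ t = ⟨(0, 1, i + 1), (1, 1, 1), (0, 0, i), (1, 1, n + 1)⟩}

def yellowH (n : ℤ) : Set (WangTile Lbl) :=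
  {t | ∃ i : ℤ, 1 ≤ i ∧ i ≤ n ∧ t = ⟨(0, 1, i + 1), (1, 1, 2), (0, 1, i), (1, 1, n + 1)⟩}

def antiH (n : ℤ) : Set (WangTile Lbl) :=
  {t | ∃ i : ℤ, 1 ≤ i ∧ i ≤ n ∧ t = ⟨(0, 0, i + 1), (1, 1, 2), (0, 1, i), (1, 1, n)⟩}

def junctionTile (n k l r s : ℤ) : WangTile Lbl :=
  ⟨(0, k, l), (0, r, s), (0, s, r + n), (0, l, k + n)⟩

def jPairs : Set (ℤ × ℤ) := {(0, 0), (0, 1), (1, 1)}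

def junctions (n : ℤ) : Set (WangTile Lbl) :=
  {t | ∃ k l r s : ℤ, (k, l) ∈ jPairs ∧ (r, s) ∈ jPairs ∧ t = junctionTile n k l r s}

def Text (n : ℤ) : Set (WangTile Lbl) :=
  whiteTiles n ∪ blueH n ∪ greenH n ∪ yellowH n ∪ antiH n ∪
    hatT '' blueH n ∪ hatT '' greenH n ∪ hatT '' yellowH n ∪ hatT '' antiH n ∪ junctions n

def Dset (n : ℤ) : Set (WangTile Lbl) :=
  {(⟨(0, 0, n + 1), (1, 1, 1), (0, 0, n), (1, 1, n)⟩ : WangTile Lbl),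
    hatT (⟨(0, 0, n + 1), (1, 1, 1), (0, 0, n), (1, 1, n)⟩ : WangTile Lbl),
    junctionTile n 0 0 1 1, junctionTile n 1 1 0 0}

def Tmet (n : ℤ) : Set (WangTile Lbl) :=
  Text n \ (antiH n ∪ hatT '' antiH n ∪ Dset n)

def ValidConfig {C : Type*} (T : Set (WangTile C)) (x : ℤ × ℤ → WangTile C) : Prop :=
  (∀ m, x m ∈ T) ∧
    (∀ m : ℤ × ℤ, (x m).right = (x (m.1 + 1, m.2)).left) ∧
    (∀ m : ℤ × ℤ, (x m).top = (x (m.1, m.2 + 1)).bottom)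

def ValidPattern {C : Type*} (T : Set (WangTile C)) (w h : ℕ) (p : ℕ → ℕ → WangTile C) : Prop :=
  (∀ i j, i < w → j < h → p i j ∈ T) ∧
    (∀ i j, i + 1 < w → j < h → (p i j).right = (p (i + 1) j).left) ∧
    (∀ i j, i < w → j + 1 < h → (p i j).top = (p i (j + 1)).bottom)

def bottomWord {C : Type*} (w : ℕ) (p : ℕ → ℕ → WangTile C) : List C :=
  (List.range w).map fun i => (p i 0).bottom

def topWord {C : Type*} (w h : ℕ) (p : ℕ → ℕ → WangTile C) : List C :=
  (List.range w).map fun i => (p i (h - 1)).top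

def leftWord {C : Type*} (h : ℕ) (p : ℕ → ℕ → WangTile C) : List C :=
  (List.range h).map fun j => (p 0 j).left

def rightWord {C : Type*} (w h : ℕ) (p : ℕ → ℕ → WangTile C) : List C :=
  (List.range h).map fun j => (p (w - 1) j).right

def tau (n : ℤ) (v : Lbl) : List Lbl :=
  if v.1 = v.2.2 then
    (0, v.1 - v.2.1 + 1, n + 1) :: List.replicate (n - v.2.2).toNat (1, 1, n + 1)
  else
    (0, v.1 - v.2.1 + 1, n) ::
      (List.replicate (v.2.2 - v.1 - 1).toNat (1, 1, n) ++
        List.replicate (n + 1 - v.2.2).toNat (1, 1, n + 1))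

/-- The block of the configuration `y` with lower-left corner at `(a, b)`. -/
def BlockAt (y : ℤ × ℤ → WangTile Lbl) (a b : ℤ) : ℕ → ℕ → WangTile Lbl :=
  fun i j => y (a + i, b + j)

/-- `y` is the image of `x` under the substitution `ω'_n` (over the tile set `T`),
with block boundaries given by the strictly increasing sequences `A`, `B`: for every
`(l1, l2)` the block of `y` with support `[A l1, A (l1+1)) × [B l2, B (l2+1))` is the
unique valid rectangular pattern over `T` whose boundary words are the images under
`τ_n` of the labels of `x (l1, l2)`. -/
def IsOmegaImage (n : ℤ) (T : Set (WangTile Lbl))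
    (x y : ℤ × ℤ → WangTile Lbl) (A B : ℤ → ℤ) : Prop :=
  StrictMono A ∧ StrictMono B ∧
  ∀ l1 l2 : ℤ,
    ValidPattern T (A (l1 + 1) - A l1).toNat (B (l2 + 1) - B l2).toNat
      (BlockAt y (A l1) (B l2)) ∧
    rightWord (A (l1 + 1) - A l1).toNat (B (l2 + 1) - B l2).toNat
      (BlockAt y (A l1) (B l2)) = tau n (x (l1, l2)).right ∧
    topWord (A (l1 + 1) - A l1).toNat (B (l2 + 1) - B l2).toNat
      (BlockAt y (A l1) (B l2)) = tau n (x (l1, l2)).top ∧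
    leftWord (B (l2 + 1) - B l2).toNat (BlockAt y (A l1) (B l2)) = tau n (x (l1, l2)).left ∧
    bottomWord (A (l1 + 1) - A l1).toNat (BlockAt y (A l1) (B l2)) = tau n (x (l1, l2)).bottom

/-
A tile of `Text n` is described by two mirror-symmetric counter laws (`TransferLaw`): along a row
the third letter of the vertical labels is a counter which grows by `1` in every column of type `1`
and is read off and reset, up to a bit, in every column of type `0`. Hence the bits which a valid
configuration passes upwards in two consecutive columns of type `0` are linked by an affine relation
involving the gap between the columns (`ValidConfig.upState_add_gap`). Since the bits are `0` or
`1`, all gaps are `n` or `n + 1`, and in a column of type `0` the bits do not decrease in rows of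
type `1` and do not increase in rows of type `0`. This excludes the antigreen tiles and the two
junctions of `D`; the two blue tiles of `D` cannot be continued. So `Ω'_n = Ω_n`.

To desubstitute, cut the plane along the columns and rows of type `0`. The bits in the left column
of a block are monotone, hence encoded by the position of their jump; these positions are the
counters of the parent configuration, and the affine relation turns into its transfer law.

In an image of the substitution the block corners are exactly the crossings of columns and rows of
type `0`, and a label of `Vn n` is determined by its image under `tau`. So the image determines the
corners, hence the parent, which is recognizability.
-/

/-- The rule by which a tile transforms its left label into its right label: a tile of column type
`1` (the first letter of its bottom label) increments the counter carried by the row, whereas a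
tile of column type `0` reads the counter off into its top label and resets it from its bottom
label. Together with its mirror image it characterises `Text n`, see `mem_Text_iff`. -/
structure TransferLaw (n : ℤ) (t : WangTile Lbl) : Prop where
  left_mem : t.left ∈ Vn n
  right_mem : t.right ∈ Vn n
  right_fst : t.right.1 = t.left.1
  right_third_of_one : t.bottom.1 = 1 → t.right.2.2 = t.left.2.2 + 1
  left_third_of_zero : t.bottom.1 = 0 → t.left.2.2 = n + t.top.2.1
  right_third_of_zero : t.bottom.1 = 0 → t.right.2.2 = t.bottom.2.1 + t.left.1

section Tiles

variable {n : ℤ} {t : WangTile Lbl}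

theorem eq_zero_or_one_of_mem_Vn {v : Lbl} (hv : v ∈ Vn n) :
    (v.1 = 0 ∨ v.1 = 1) ∧ (v.2.1 = 0 ∨ v.2.1 = 1) := by
  obtain ⟨h0, h1, h2, -⟩ := hv
  omega

theorem transferLaw_of_mem_Text (hn : 1 ≤ n) (ht : t ∈ Text n) :
    TransferLaw n t ∧ TransferLaw n (hatT t) := by
  rcases ht with (((((((((⟨i, j, hi, hi', hj, hj', rfl⟩ | ⟨i, hi, hi', rfl⟩) |
    ⟨i, hi, hi', rfl⟩) | ⟨i, hi, hi', rfl⟩) | ⟨i, hi, hi', rfl⟩) | ⟨_, ⟨i, hi, hi', rfl⟩, rfl⟩) |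
    ⟨_, ⟨i, hi, hi', rfl⟩, rfl⟩) | ⟨_, ⟨i, hi, hi', rfl⟩, rfl⟩) | ⟨_, ⟨i, hi, hi', rfl⟩, rfl⟩) |
    ⟨k, l, r, s, hkl, hrs, rfl⟩)
  case inr =>
    simp only [jPairs, Set.mem_insert_iff, Set.mem_singleton_iff, Prod.mk.injEq] at hkl hrs
    constructor <;> constructor <;> simp only [hatT, Vn, junctionTile, Set.mem_ofPred_eq] <;> lia
  all_goals constructor <;> constructor <;> simp only [hatT, Vn, Set.mem_ofPred_eq] <;> lia

theorem TransferLaw.mem_whiteTiles (h : TransferLaw n t) (h' : TransferLaw n (hatT t))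
    (hu : t.bottom.1 = 1) (hv : t.left.1 = 1) : t ∈ whiteTiles n := by
  obtain ⟨⟨r₁, r₂, r₃⟩, ⟨t₁, t₂, t₃⟩, ⟨l₁, l₂, l₃⟩, ⟨b₁, b₂, b₃⟩⟩ := t
  obtain ⟨hl, hr, hrl, hr₃, -, -⟩ := h
  obtain ⟨hb, ht, htb, ht₃, -, -⟩ := h'
  simp only [hatT, Vn, Set.mem_ofPred_eq] at *
  replace hr₃ := hr₃ hu
  replace ht₃ := ht₃ hv
  refine ⟨l₃, b₃, by omega, by omega, by omega, by omega, ?_⟩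
  simp only [WangTile.mk.injEq, Prod.mk.injEq, and_true]
  omega

theorem TransferLaw.mem_horizontal (h : TransferLaw n t) (h' : TransferLaw n (hatT t))
    (hu : t.bottom.1 = 1) (hv : t.left.1 = 0) :
    t ∈ blueH n ∪ greenH n ∪ yellowH n ∪ antiH n := by
  obtain ⟨⟨r₁, r₂, r₃⟩, ⟨t₁, t₂, t₃⟩, ⟨l₁, l₂, l₃⟩, ⟨b₁, b₂, b₃⟩⟩ := t
  obtain ⟨hl, hr, hrl, hr₃, -, -⟩ := h
  obtain ⟨hb, ht, htb, -, hb₃, ht₃⟩ := h'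
  simp only [hatT, Vn, Set.mem_ofPred_eq] at *
  replace hr₃ := hr₃ hu
  replace hb₃ := hb₃ hv
  replace ht₃ := ht₃ hv
  have tile : ∀ p q : ℤ, l₂ = p → r₂ = q →
      (⟨(r₁, r₂, r₃), (t₁, t₂, t₃), (l₁, l₂, l₃), (b₁, b₂, b₃)⟩ : WangTile Lbl) =
        ⟨(0, q, l₃ + 1), (1, 1, p + 1), (0, p, l₃), (1, 1, n + q)⟩ := by
    rintro p q rfl rfl
    simp only [WangTile.mk.injEq, Prod.mk.injEq, and_true, true_and]
    omega
  obtain hp | hp : l₂ = 0 ∨ l₂ = 1 := by omega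
  all_goals obtain hq | hq : r₂ = 0 ∨ r₂ = 1 := by omega
  · exact .inl (.inl (.inl ⟨l₃, by omega, by omega, by simpa using tile 0 0 hp hq⟩))
  · exact .inl (.inl (.inr ⟨l₃, by omega, by omega, by simpa using tile 0 1 hp hq⟩))
  · exact .inr ⟨l₃, by omega, by omega, by simpa using tile 1 0 hp hq⟩
  · exact .inl (.inr ⟨l₃, by omega, by omega, by simpa using tile 1 1 hp hq⟩)

theorem TransferLaw.mem_junctions (h : TransferLaw n t) (h' : TransferLaw n (hatT t))
    (hu : t.bottom.1 = 0) (hv : t.left.1 = 0) : t ∈ junctions n := by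
  obtain ⟨⟨r₁, r₂, r₃⟩, ⟨t₁, t₂, t₃⟩, ⟨l₁, l₂, l₃⟩, ⟨b₁, b₂, b₃⟩⟩ := t
  obtain ⟨hl, hr, hrl, -, hl₃, hr₃⟩ := h
  obtain ⟨hb, ht, htb, -, hb₃, ht₃⟩ := h'
  simp only [hatT, Vn, Set.mem_ofPred_eq] at *
  replace hl₃ := hl₃ hu
  replace hr₃ := hr₃ hu
  replace hb₃ := hb₃ hv
  replace ht₃ := ht₃ hv
  refine ⟨r₂, r₃, t₂, t₃, ?_, ?_, ?_⟩
  · simp only [jPairs, Set.mem_insert_iff, Set.mem_singleton_iff, Prod.mk.injEq]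
    omega
  · simp only [jPairs, Set.mem_insert_iff, Set.mem_singleton_iff, Prod.mk.injEq]
    omega
  · simp only [junctionTile, WangTile.mk.injEq, Prod.mk.injEq, and_true]
    omega

theorem mem_Text_iff (hn : 1 ≤ n) : t ∈ Text n ↔ TransferLaw n t ∧ TransferLaw n (hatT t) := by
  refine ⟨transferLaw_of_mem_Text hn, fun ⟨h, h'⟩ => ?_⟩
  have Text_eq : Text n = whiteTiles n ∪ (blueH n ∪ greenH n ∪ yellowH n ∪ antiH n) ∪
      hatT '' (blueH n ∪ greenH n ∪ yellowH n ∪ antiH n) ∪ junctions n := by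
    simp only [Text, Set.image_union, Set.union_assoc]
  rw [Text_eq]
  obtain hu | hu := (eq_zero_or_one_of_mem_Vn h'.left_mem).1 <;>
    obtain hv | hv := (eq_zero_or_one_of_mem_Vn h.left_mem).1
  · exact .inr (h.mem_junctions h' hu hv)
  · exact .inl (.inr ⟨hatT t, h'.mem_horizontal h hv hu, rfl⟩)
  · exact .inl (.inl (.inr (h.mem_horizontal h' hu hv)))
  · exact .inl (.inl (.inl (h.mem_whiteTiles h' hu hv)))

theorem hatT_mem_Text (hn : 1 ≤ n) (ht : t ∈ Text n) : hatT t ∈ Text n :=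
  (mem_Text_iff hn).2 ((mem_Text_iff hn).1 ht).symm

theorem left_ne_of_mem_Text (hn : 1 ≤ n) (ht : t ∈ Text n) : t.left ≠ (0, 0, n + 1) := by
  intro h
  obtain ⟨law, law'⟩ := (mem_Text_iff hn).1 ht
  obtain ⟨-, -, -, hr⟩ := law.right_mem
  obtain ⟨-, -, -, ht, -⟩ := law'.right_mem
  have h₁ := law.right_third_of_one
  have h₀ := law.left_third_of_zero
  have h₀' := law'.right_third_of_zero
  have hu := (eq_zero_or_one_of_mem_Vn law'.left_mem).1
  simp only [hatT, h, forall_const] at *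
  omega

/-- The conditions which, imposed on a tile of `Text n` and on its mirror image, single out the
tiles of `Tmet n`: the right label is not that of the last blue tile, and the second letter does not
decrease (increase) along a column of type `0` when it crosses a row of type `1` (type `0`). -/
structure Restricted (n : ℤ) (t : WangTile Lbl) : Prop where
  right_ne : t.right ≠ (0, 0, n + 1)
  bottom_le_top : t.bottom.1 = 0 → t.left.1 = 1 → t.bottom.2.1 ≤ t.top.2.1
  top_le_bottom : t.bottom.1 = 0 → t.left.1 = 0 → t.top.2.1 ≤ t.bottom.2.1

theorem mem_Tmet_of_mem_Text (ht : t ∈ Text n) (h : Restricted n t)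
    (h' : Restricted n (hatT t)) : t ∈ Tmet n := by
  refine ⟨ht, ?_⟩
  rintro ((⟨i, -, -, rfl⟩ | ⟨_, ⟨i, -, -, rfl⟩, rfl⟩) | rfl | rfl | rfl | rfl)
  · simpa [hatT] using h'.bottom_le_top
  · simpa [hatT] using h.bottom_le_top
  · exact h.right_ne rfl
  · exact h'.right_ne rfl
  · simpa [junctionTile] using h.top_le_bottom
  · simpa [hatT, junctionTile] using h'.top_le_bottom

end Tiles

section IntegerSequences

theorem exists_strictMono_range_eq {S : Set ℤ} (above : ¬BddAbove S) (below : ¬BddBelow S) :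
    ∃ A : ℤ → ℤ, StrictMono A ∧ Set.range A = S := by
  classical
  have : Nonempty S := (nonempty_of_not_bddAbove above).to_subtype
  have : NoMaxOrder S := ⟨fun a => by
    obtain ⟨m, hm, ham⟩ := not_bddAbove_iff.1 above a
    exact ⟨⟨m, hm⟩, ham⟩⟩
  have : NoMinOrder S := ⟨fun a => by
    obtain ⟨m, hm, hma⟩ := not_bddBelow_iff.1 below a
    exact ⟨⟨m, hm⟩, hma⟩⟩
  let : LocallyFiniteOrder S := Subtype.instLocallyFiniteOrder _
  let : SuccOrder S := LinearLocallyFiniteOrder.succOrder S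
  let : PredOrder S := LinearLocallyFiniteOrder.predOrder S
  let e : S ≃o ℤ := orderIsoIntOfLinearSuccPredArch
  refine ⟨fun l => e.symm l, fun _ _ h => e.symm.strictMono h, ?_⟩
  rw [show (fun l => (e.symm l : ℤ)) = Subtype.val ∘ e.symm from rfl, Set.range_comp,
    e.symm.surjective.range_eq, Set.image_univ, Subtype.range_coe]

variable {A : ℤ → ℤ}

theorem notMem_range_of_lt_of_lt (hA : StrictMono A) {l m : ℤ} (h : A l < m)
    (h' : m < A (l + 1)) : m ∉ Set.range A := by
  rintro ⟨k, rfl⟩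
  have := hA.lt_iff_lt.1 h
  have := hA.lt_iff_lt.1 h'
  omega

theorem exists_le_lt_succ (hA : StrictMono A) (m : ℤ) : ∃ l, A l ≤ m ∧ m < A (l + 1) := by
  have drift : Monotone fun l => A l - l := monotone_int_of_le_succ fun l => by
    have := hA (lt_add_one l)
    omega
  have bounded (l : ℤ) (hl : A l ≤ m) : l ≤ max 0 (m - A 0) := by
    by_contra! h
    have : A 0 - 0 ≤ A l - l := drift (by omega)
    omega
  have attained : A (min 0 (m - A 0)) ≤ m := by
    have : A (min 0 (m - A 0)) - min 0 (m - A 0) ≤ A 0 - 0 := drift (by omega)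
    omega
  obtain ⟨l, hl, greatest⟩ := Int.exists_greatest_of_bdd ⟨_, bounded⟩ ⟨_, attained⟩
  refine ⟨l, hl, ?_⟩
  by_contra! h
  have := greatest _ h
  omega

theorem eq_of_le_lt_succ (hA : StrictMono A) {l l' m : ℤ} (h₁ : A l ≤ m) (h₂ : m < A (l + 1))
    (h₁' : A l' ≤ m) (h₂' : m < A (l' + 1)) : l = l' := by
  have := hA.lt_iff_lt.1 (h₁.trans_lt h₂')
  have := hA.lt_iff_lt.1 (h₁'.trans_lt h₂)
  omega

theorem eq_of_range_eq {A' : ℤ → ℤ} (hA : StrictMono A) (hA' : StrictMono A')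
    (range_eq : Set.range A = Set.range A') (h₀ : A 0 ≤ 0) (h₁ : 0 < A 1) (h₀' : A' 0 ≤ 0)
    (h₁' : 0 < A' 1) : A = A' := by
  let e : ℤ ≃o ℤ := hA.orderIso.trans ((OrderIso.setCongr _ _ range_eq).trans hA'.orderIso.symm)
  have apply_e (l : ℤ) : A' (e l) = A l :=
    congrArg Subtype.val (hA'.orderIso.apply_symm_apply ⟨A l, range_eq.subset ⟨l, rfl⟩⟩)
  have e_succ (l : ℤ) : e (l + 1) = e l + 1 := e.map_succ l
  have e_zero : e 0 = 0 := eq_of_le_lt_succ hA' ((apply_e 0).trans_le h₀)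
    (by rwa [← e_succ, apply_e]) h₀' (by simpa using h₁')
  have e_eq (l : ℤ) : e l = l := by
    induction l using Int.induction_on with
    | zero => exact e_zero
    | succ l ih => rw [e_succ, ih]
    | pred l ih =>
      have := e_succ (-l - 1)
      rw [sub_add_cancel, ih] at this
      omega
  exact funext fun l => by rw [← apply_e, e_eq]

theorem exists_succ_eq_add (g : ℤ → ℤ) :
    ∃ A : ℤ → ℤ, A 0 = 0 ∧ ∀ l, A (l + 1) = A l + g l := by
  refine ⟨fun l => ∑ i ∈ Finset.Ico 0 l, g i - ∑ i ∈ Finset.Ico l 0, g i, by simp, fun l => ?_⟩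
  beta_reduce
  obtain hl | hl := le_or_gt 0 l
  · rw [Finset.Ico_eq_empty (a := l) (by omega), Finset.Ico_eq_empty (a := l + 1) (by omega),
      ← Finset.insert_Ico_right_eq_Ico_add_one hl]
    simp [add_comm]
  · rw [Finset.Ico_eq_empty (b := l) (by omega), Finset.Ico_eq_empty (b := l + 1) (by omega),
      ← Finset.insert_Ico_add_one_left_eq_Ico hl]
    simp

end IntegerSequences

/-- The mirror image of a configuration in the diagonal. It exchanges the roles of rows and
columns, so that a statement about columns yields one about rows. -/
def reflect {C : Type*} (y : ℤ × ℤ → WangTile C) : ℤ × ℤ → WangTile C :=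
  fun m => hatT (y (m.2, m.1))

/-- The type (`0` or `1`) of a column: the common first letter of its horizontal labels. -/
def colType (y : ℤ × ℤ → WangTile Lbl) (a : ℤ) : ℤ := (y (a, 0)).bottom.1

/-- The type (`0` or `1`) of a row: the common first letter of its vertical labels. -/
def rowType (y : ℤ × ℤ → WangTile Lbl) (b : ℤ) : ℤ := colType (reflect y) b

/-- The bit which the tile at `(a, b)` passes to its upper neighbour. -/
def upState (y : ℤ × ℤ → WangTile Lbl) (a b : ℤ) : ℤ := (y (a, b)).top.2.1

/-- The bit which the tile at `(a, b)` passes to its right neighbour. -/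
def rightState (y : ℤ × ℤ → WangTile Lbl) (a b : ℤ) : ℤ := upState (reflect y) b a

/-- `a < a'` are consecutive zeros of `f`. -/
structure ConsecutiveZeros (f : ℤ → ℤ) (a a' : ℤ) : Prop where
  lt : a < a'
  left_eq : f a = 0
  right_eq : f a' = 0
  ne_zero : ∀ m, a < m → m < a' → f m ≠ 0

theorem consecutiveZeros_of_range_eq {f A : ℤ → ℤ} (hA : StrictMono A)
    (hf : Set.range A = {a | f a = 0}) (l : ℤ) : ConsecutiveZeros f (A l) (A (l + 1)) where
  lt := hA (lt_add_one l)
  left_eq := hf.subset ⟨l, rfl⟩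
  right_eq := hf.subset ⟨l + 1, rfl⟩
  ne_zero _ h h' hm := notMem_range_of_lt_of_lt hA h h' (hf.superset hm)

namespace ValidConfig

variable {n : ℤ} {y : ℤ × ℤ → WangTile Lbl}

theorem right_eq {C : Type*} {T : Set (WangTile C)} {y : ℤ × ℤ → WangTile C}
    (hy : ValidConfig T y) (a b : ℤ) : (y (a, b)).right = (y (a + 1, b)).left :=
  hy.2.1 (a, b)

theorem top_eq {C : Type*} {T : Set (WangTile C)} {y : ℤ × ℤ → WangTile C}
    (hy : ValidConfig T y) (a b : ℤ) : (y (a, b)).top = (y (a, b + 1)).bottom :=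
  hy.2.2 (a, b)

theorem reflect_image {C : Type*} {T : Set (WangTile C)} {y : ℤ × ℤ → WangTile C}
    (hy : ValidConfig T y) : ValidConfig (hatT '' T) (reflect y) :=
  ⟨fun _ => ⟨_, hy.1 _, rfl⟩, fun _ => hy.2.2 _, fun _ => hy.2.1 _⟩

theorem reflect (hn : 1 ≤ n) (hy : ValidConfig (Text n) y) : ValidConfig (Text n) (reflect y) :=
  ⟨fun _ => hatT_mem_Text hn (hy.1 _), fun _ => hy.2.2 _, fun _ => hy.2.1 _⟩

theorem transferLaw (hn : 1 ≤ n) (hy : ValidConfig (Text n) y) (a b : ℤ) :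
    TransferLaw n (y (a, b)) :=
  ((mem_Text_iff hn).1 (hy.1 _)).1

theorem left_fst (hn : 1 ≤ n) (hy : ValidConfig (Text n) y) (a b : ℤ) :
    (y (a, b)).left.1 = rowType y b := by
  have step (a : ℤ) : (y (a + 1, b)).left.1 = (y (a, b)).left.1 := by
    rw [← hy.right_eq, (hy.transferLaw hn a b).right_fst]
  induction a using Int.induction_on with
  | zero => rfl
  | succ a ih => rw [step, ih]
  | pred a ih => rw [← step, sub_add_cancel, ih]

theorem bottom_fst (hn : 1 ≤ n) (hy : ValidConfig (Text n) y) (a b : ℤ) :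
    (y (a, b)).bottom.1 = colType y a :=
  (hy.reflect hn).left_fst hn b a

theorem left_snd (hy : ValidConfig (Text n) y) (a b : ℤ) :
    (y (a, b)).left.2.1 = rightState y (a - 1) b := by
  rw [← sub_add_cancel a 1, ← hy.right_eq, sub_add_cancel]
  rfl

theorem bottom_snd (hn : 1 ≤ n) (hy : ValidConfig (Text n) y) (a b : ℤ) :
    (y (a, b)).bottom.2.1 = upState y a (b - 1) :=
  (hy.reflect hn).left_snd b a

theorem rowType_eq_zero_or_one (hn : 1 ≤ n) (hy : ValidConfig (Text n) y) (b : ℤ) :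
    rowType y b = 0 ∨ rowType y b = 1 :=
  (eq_zero_or_one_of_mem_Vn (hy.transferLaw hn 0 b).left_mem).1

theorem colType_eq_zero_or_one (hn : 1 ≤ n) (hy : ValidConfig (Text n) y) (a : ℤ) :
    colType y a = 0 ∨ colType y a = 1 :=
  (hy.reflect hn).rowType_eq_zero_or_one hn a

theorem rightState_eq_zero_or_one (hn : 1 ≤ n) (hy : ValidConfig (Text n) y) (a b : ℤ) :
    rightState y a b = 0 ∨ rightState y a b = 1 :=
  (eq_zero_or_one_of_mem_Vn (hy.transferLaw hn a b).right_mem).2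

theorem upState_eq_zero_or_one (hn : 1 ≤ n) (hy : ValidConfig (Text n) y) (a b : ℤ) :
    upState y a b = 0 ∨ upState y a b = 1 :=
  (hy.reflect hn).rightState_eq_zero_or_one hn b a

theorem rightState_le_upState_add_rowType (hn : 1 ≤ n) (hy : ValidConfig (Text n) y) {a : ℤ}
    (ha : colType y a = 0) (b : ℤ) : rightState y a b ≤ upState y a (b - 1) + rowType y b := by
  have law := hy.transferLaw hn a b
  rw [← hy.bottom_snd hn, ← hy.left_fst hn a,
    ← law.right_third_of_zero ((hy.bottom_fst hn a b).trans ha)]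
  exact law.right_mem.2.2.2.1

theorem upState_le_rightState_add_colType (hn : 1 ≤ n) (hy : ValidConfig (Text n) y) {b : ℤ}
    (hb : rowType y b = 0) (a : ℤ) : upState y a b ≤ rightState y (a - 1) b + colType y a :=
  (hy.reflect hn).rightState_le_upState_add_rowType hn hb a

theorem left_third_of_colType_eq_one (hn : 1 ≤ n) (hy : ValidConfig (Text n) y) {a a' : ℤ}
    (b : ℤ) (haa' : a + 1 ≤ a') (h : ∀ m, a < m → m < a' → colType y m = 1) :
    (y (a', b)).left.2.2 = (y (a, b)).right.2.2 + (a' - a - 1) := by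
  induction a', haa' using Int.leInduction with
  | base => simp [hy.right_eq]
  | succ a' haa' ih =>
    have type_eq : (y (a', b)).bottom.1 = 1 :=
      (hy.bottom_fst hn a' b).trans (h a' (by omega) (by omega))
    rw [← hy.right_eq, (hy.transferLaw hn a' b).right_third_of_one type_eq,
      ih fun m h₁ h₂ => h m h₁ (by omega)]
    ring

theorem exists_colType_eq_zero (hn : 1 ≤ n) (hy : ValidConfig (Text n) y) (a : ℤ) :
    ∃ m, a < m ∧ m < a + (n + 4) ∧ colType y m = 0 := by
  by_contra! h
  have third := hy.left_third_of_colType_eq_one hn 0 (show a + 1 ≤ a + (n + 4) by omega)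
    fun m h₁ h₂ => (hy.colType_eq_zero_or_one hn m).resolve_left (h m h₁ h₂)
  obtain ⟨h₀, h₁, -, h₂, -⟩ := (hy.transferLaw hn a 0).right_mem
  obtain ⟨-, -, -, -, h₃⟩ := (hy.transferLaw hn (a + (n + 4)) 0).left_mem
  omega

theorem exists_strictMono_range_eq_zeros (hn : 1 ≤ n) (hy : ValidConfig (Text n) y) :
    ∃ A : ℤ → ℤ, StrictMono A ∧ Set.range A = {a | colType y a = 0} := by
  refine exists_strictMono_range_eq (not_bddAbove_iff.2 fun a => ?_)
    (not_bddBelow_iff.2 fun a => ?_)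
  · obtain ⟨m, hm, -, h⟩ := hy.exists_colType_eq_zero hn a
    exact ⟨m, h, hm⟩
  · obtain ⟨m, -, hm, h⟩ := hy.exists_colType_eq_zero hn (a - (n + 4))
    exact ⟨m, h, by omega⟩

theorem exists_consecutiveZeros_left (hn : 1 ≤ n) (hy : ValidConfig (Text n) y) {a : ℤ}
    (ha : colType y a = 0) : ∃ a', ConsecutiveZeros (colType y) a a' := by
  obtain ⟨A, hA, range_A⟩ := hy.exists_strictMono_range_eq_zeros hn
  obtain ⟨l, rfl⟩ := range_A.superset ha
  exact ⟨_, consecutiveZeros_of_range_eq hA range_A l⟩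

theorem exists_consecutiveZeros_right (hn : 1 ≤ n) (hy : ValidConfig (Text n) y) {a' : ℤ}
    (ha' : colType y a' = 0) : ∃ a, ConsecutiveZeros (colType y) a a' := by
  obtain ⟨A, hA, range_A⟩ := hy.exists_strictMono_range_eq_zeros hn
  obtain ⟨l, rfl⟩ := range_A.superset ha'
  exact ⟨A (l - 1), by simpa using consecutiveZeros_of_range_eq hA range_A (l - 1)⟩

/- A row starts from the counter `upState y a (b - 1) + rowType y b` after column `a`, gains `1` in
each column of type `1`, and must show `n + upState y a' b` on reaching column `a'`. -/
theorem upState_add_gap (hn : 1 ≤ n) (hy : ValidConfig (Text n) y) {a a' : ℤ}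
    (h : ConsecutiveZeros (colType y) a a') (b : ℤ) :
    n + upState y a' b = upState y a (b - 1) + rowType y b + (a' - a - 1) := by
  have counter := hy.left_third_of_colType_eq_one hn b h.lt fun m h₁ h₂ =>
    (hy.colType_eq_zero_or_one hn m).resolve_left (h.ne_zero m h₁ h₂)
  rwa [(hy.transferLaw hn a' b).left_third_of_zero ((hy.bottom_fst hn a' b).trans h.right_eq),
    (hy.transferLaw hn a b).right_third_of_zero ((hy.bottom_fst hn a b).trans h.left_eq),
    hy.bottom_snd hn, hy.left_fst hn] at counter

theorem rightState_add_gap (hn : 1 ≤ n) (hy : ValidConfig (Text n) y) {b b' : ℤ}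
    (h : ConsecutiveZeros (rowType y) b b') (a : ℤ) :
    n + rightState y a b' = rightState y (a - 1) b + colType y a + (b' - b - 1) :=
  (hy.reflect hn).upState_add_gap hn h a

theorem exists_colType_eq_one (hn : 1 ≤ n) (hy : ValidConfig (Text n) y) :
    ∃ a, colType y a = 1 := by
  by_contra! h
  have type_eq (a : ℤ) : colType y a = 0 := (hy.colType_eq_zero_or_one hn a).resolve_right (h a)
  have step (a b : ℤ) : n + upState y (a + 1) b = upState y a (b - 1) + rowType y b := by
    simpa using hy.upState_add_gap hn
      ⟨lt_add_one a, type_eq a, type_eq (a + 1), fun m _ _ => by omega⟩ b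
  have state (a b : ℤ) := hy.upState_eq_zero_or_one hn a b
  obtain ⟨b, -, -, hb⟩ : ∃ b, _ ∧ _ ∧ rowType y b = 0 :=
    (hy.reflect hn).exists_colType_eq_zero hn 0
  have upState_eq_zero (m : ℤ) (hm : b ≤ m) : ∀ a, upState y (a + 1) m = 0 := by
    induction m, hm using Int.leInduction with
    | base =>
      intro a
      have := step a b
      have := state a (b - 1)
      have := state (a + 1) b
      omega
    | succ m _ ih =>
      intro a
      have := step a (m + 1)
      have := state (a + 1) (m + 1)
      have := hy.rowType_eq_zero_or_one hn (m + 1)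
      have := ih (a - 1)
      simp only [add_sub_cancel_right, sub_add_cancel] at *
      omega
  obtain ⟨b', hbb', -, hb'⟩ : ∃ b', b < b' ∧ _ ∧ rowType y b' = 0 :=
    (hy.reflect hn).exists_colType_eq_zero hn b
  have := step (0 + 1) b'
  have := upState_eq_zero (b' - 1) (by omega) 0
  have := state (0 + 1 + 1) b'
  omega

theorem gap_eq_or_eq_add_one (hn : 1 ≤ n) (hy : ValidConfig (Text n) y) {a a' : ℤ}
    (h : ConsecutiveZeros (colType y) a a') : a' - a = n ∨ a' - a = n + 1 := by
  obtain ⟨b₁, hb₁⟩ : ∃ b, rowType y b = 1 := (hy.reflect hn).exists_colType_eq_one hn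
  obtain ⟨b₀, -, -, hb₀⟩ : ∃ b, _ ∧ _ ∧ rowType y b = 0 :=
    (hy.reflect hn).exists_colType_eq_zero hn 0
  have state (a b : ℤ) := hy.upState_eq_zero_or_one hn a b
  have := hy.upState_add_gap hn h b₀
  have := hy.upState_add_gap hn h b₁
  have := state a (b₀ - 1)
  have := state a (b₁ - 1)
  have := state a' b₀
  have := state a' b₁
  omega

/- A descent in a row of type `1` would force a descent in the row below, in the preceding column of
type `0`, and would force that row to have type `1` as well; but some row below has type `0`. -/
theorem upState_le_upState_of_one (hn : 1 ≤ n) (hy : ValidConfig (Text n) y) {a b : ℤ}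
    (ha : colType y a = 0) (hb : rowType y b = 1) : upState y a (b - 1) ≤ upState y a b := by
  by_contra! descent
  have state (a b : ℤ) := hy.upState_eq_zero_or_one hn a b
  have descents (m : ℤ) (hm : m ≤ b) :
      rowType y m = 1 ∧ ∃ a, colType y a = 0 ∧ upState y a m < upState y a (m - 1) := by
    induction m, hm using Int.leInductionDown with
    | base => exact ⟨hb, a, ha, descent⟩
    | pred m _ ih =>
      obtain ⟨hm₁, a', ha', descent'⟩ := ih
      obtain ⟨a, h⟩ := hy.exists_consecutiveZeros_right hn ha'
      have := hy.gap_eq_or_eq_add_one hn h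
      have := hy.upState_add_gap hn h m
      have := hy.upState_add_gap hn h (m - 1)
      have := state a' m
      have := state a' (m - 1)
      have := state a (m - 1)
      have := state a (m - 1 - 1)
      have := hy.rowType_eq_zero_or_one hn (m - 1)
      exact ⟨by omega, a, h.left_eq, by omega⟩
  obtain ⟨m, -, hmb, hm⟩ : ∃ m, _ ∧ m < _ ∧ rowType y m = 0 :=
    (hy.reflect hn).exists_colType_eq_zero hn (b - (n + 4))
  have := (descents m (by omega)).1
  omega

theorem upState_le_upState_of_zero (hn : 1 ≤ n) (hy : ValidConfig (Text n) y) {a b : ℤ}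
    (ha : colType y a = 0) (hb : rowType y b = 0) : upState y a b ≤ upState y a (b - 1) := by
  by_contra! ascent
  obtain ⟨a', h⟩ := hy.exists_consecutiveZeros_left hn ha
  obtain ⟨b', h'⟩ : ∃ b', ConsecutiveZeros (rowType y) b b' :=
    (hy.reflect hn).exists_consecutiveZeros_left hn hb
  have state (a b : ℤ) := hy.upState_eq_zero_or_one hn a b
  have state' (a b : ℤ) := hy.rightState_eq_zero_or_one hn a b
  have gap := hy.gap_eq_or_eq_add_one hn h
  have step := hy.upState_add_gap hn h b
  have step' := hy.upState_add_gap hn h (b + 1)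
  rw [add_sub_cancel_right] at step'
  have := state a (b - 1)
  have := state a b
  have := state a' b
  have := state a' (b + 1)
  have hb₁ : rowType y (b + 1) = 0 := by
    have := hy.rowType_eq_zero_or_one hn (b + 1)
    omega
  obtain rfl : b' = b + 1 := by
    by_contra hb'
    exact h'.ne_zero _ (lt_add_one b) (by have := h'.lt; omega) hb₁
  have turn := hy.rightState_add_gap hn h' (a + 1)
  rw [add_sub_cancel_right] at turn
  have := hy.rightState_le_upState_add_rowType hn ha b
  have := state' a b
  have := state' (a + 1) (b + 1)
  have := hy.colType_eq_zero_or_one hn (a + 1)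
  obtain rfl : a' = a + 1 + 1 := by omega
  have bound := hy.upState_le_rightState_add_colType hn hb₁ (a + 1 + 1)
  rw [add_sub_cancel_right, h.right_eq] at bound
  omega

theorem restricted (hn : 1 ≤ n) (hy : ValidConfig (Text n) y) (a b : ℤ) :
    Restricted n (y (a, b)) where
  right_ne := hy.right_eq a b ▸ left_ne_of_mem_Text hn (hy.1 _)
  bottom_le_top ha hb := by
    rw [hy.bottom_fst hn] at ha
    rw [hy.left_fst hn] at hb
    rw [hy.bottom_snd hn]
    exact hy.upState_le_upState_of_one hn ha hb
  top_le_bottom ha hb := by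
    rw [hy.bottom_fst hn] at ha
    rw [hy.left_fst hn] at hb
    rw [hy.bottom_snd hn]
    exact hy.upState_le_upState_of_zero hn ha hb

end ValidConfig

theorem validConfig_Tmet_iff {n : ℤ} (hn : 1 ≤ n) {y : ℤ × ℤ → WangTile Lbl} :
    ValidConfig (Tmet n) y ↔ ValidConfig (Text n) y := by
  refine ⟨fun hy => ⟨fun m => (hy.1 m).1, hy.2⟩, fun hy => ⟨fun m => ?_, hy.2⟩⟩
  exact mem_Tmet_of_mem_Text (hy.1 m) (hy.restricted hn _ _) ((hy.reflect hn).restricted hn _ _)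

/-- The step function with value `0` before `Z` and `1` from `Z` on. -/
def stepAt (Z j : ℤ) : ℤ := if j < Z then 0 else 1

theorem exists_eq_stepAt {f : ℤ → ℤ} {N : ℤ} (hf : ∀ j, f j = 0 ∨ f j = 1)
    (mono : MonotoneOn f (Set.Icc 0 N)) (hN : 0 ≤ N) :
    ∃ Z, 0 ≤ Z ∧ Z ≤ N + 1 ∧ ∀ j, 0 ≤ j → j ≤ N → f j = stepAt Z j := by
  obtain ⟨Z, ⟨hZ₀, hZ⟩, least⟩ := Int.exists_least_of_bdd
    (P := fun Z => 0 ≤ Z ∧ (Z ≤ N → f Z = 1)) ⟨0, fun _ h => h.1⟩ ⟨N + 1, by omega, by omega⟩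
  refine ⟨Z, hZ₀, least _ ⟨by omega, by omega⟩, fun j hj hjN => ?_⟩
  rw [stepAt]
  split_ifs with hjZ
  · by_contra h
    have := least j ⟨hj, fun _ => (hf j).resolve_left h⟩
    omega
  · have : f Z ≤ f j := mono ⟨hZ₀, by omega⟩ ⟨hj, hjN⟩ (by omega)
    have := hf j
    have := hZ (by omega)
    omega

theorem eq_of_stepAt_eq {Z Z' N : ℤ} (hZ : 0 ≤ Z) (hZN : Z ≤ N + 1) (hZ' : 0 ≤ Z')
    (hZN' : Z' ≤ N + 1) (h : ∀ j, 0 ≤ j → j ≤ N → stepAt Z j = stepAt Z' j) : Z = Z' := by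
  by_contra! hne
  have := h (min Z Z') (by omega) (by omega)
  simp only [stepAt] at this
  split_ifs at this <;> omega

/-- The `j`-th letter of `tau n v`, for `0 ≤ j < n + 1 - v.1`. -/
def tauLetter (n : ℤ) (v : Lbl) (j : ℤ) : Lbl :=
  (if j = 0 then 0 else 1, if j = 0 then v.1 - v.2.1 + 1 else 1, n + stepAt (v.2.2 - v.1) j)

section Tau

variable {n : ℤ} {v : Lbl}

theorem tau_eq_map (hn : 1 ≤ n) (hv : v ∈ Vn n) :
    tau n v = (List.range (n + 1 - v.1).toNat).map fun j : ℕ => tauLetter n v j := by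
  obtain ⟨x, y, z⟩ := v
  simp only [Vn, Set.mem_ofPred_eq] at hv
  simp only [tau]
  split_ifs with h
  · refine List.ext_getElem (by simp; omega) fun i hi hi' => ?_
    cases i with
    | zero => simp [tauLetter, stepAt, h]
    | succ i => simp [tauLetter, stepAt, h, show (0 : ℤ) ≤ i + 1 by omega]
  · refine List.ext_getElem (by simp; omega) fun i hi hi' => ?_
    cases i with
    | zero => simp [tauLetter, stepAt, show x < z by omega]
    | succ i =>
      have : i < (z - x - 1).toNat ↔ (i + 1 : ℤ) < z - x := by omega
      simp only [List.getElem_cons_succ, List.getElem_append, List.getElem_replicate,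
        List.length_replicate, List.getElem_map, List.getElem_range, tauLetter, stepAt, this]
      split_ifs <;> simp <;> omega

theorem length_tau (hn : 1 ≤ n) (hv : v ∈ Vn n) : ((tau n v).length : ℤ) = n + 1 - v.1 := by
  have := (eq_zero_or_one_of_mem_Vn hv).1
  rw [tau_eq_map hn hv, List.length_map, List.length_range]
  omega

theorem map_range_eq_tau_iff (hn : 1 ≤ n) (hv : v ∈ Vn n) {h : ℕ} {f : ℕ → Lbl} :
    (List.range h).map f = tau n v ↔
      (h : ℤ) = n + 1 - v.1 ∧ ∀ j : ℕ, j < h → f j = tauLetter n v j := by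
  have words_eq_iff (hh : (h : ℤ) = n + 1 - v.1) :
      (List.range h).map f = tau n v ↔ ∀ j : ℕ, j < h → f j = tauLetter n v j := by
    rw [tau_eq_map hn hv, ← hh, Int.toNat_natCast, List.map_inj_left]
    simp only [List.mem_range]
  refine ⟨fun e => ?_, fun ⟨hh, e⟩ => (words_eq_iff hh).2 e⟩
  have hh : (h : ℤ) = n + 1 - v.1 := by rw [← length_tau hn hv, ← e]; simp
  exact ⟨hh, (words_eq_iff hh).1 e⟩

theorem eq_of_tauLetter_eq {w : Lbl} (hn : 1 ≤ n) (hv : v ∈ Vn n) (hw : w ∈ Vn n)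
    (fst_eq : v.1 = w.1) (h : ∀ j, 0 ≤ j → j < n + 1 - v.1 → tauLetter n v j = tauLetter n w j) :
    v = w := by
  obtain ⟨x, y, z⟩ := v
  obtain ⟨x', y', z'⟩ := w
  simp only [Vn, Set.mem_ofPred_eq] at *
  subst fst_eq
  have first := congrArg (fun w : Lbl => w.2.1) (h 0 le_rfl (by omega))
  have third : z - x = z' - x :=
    eq_of_stepAt_eq (N := n - x) (by omega) (by omega) (by omega) (by omega) fun j hj hj' => by
      simpa [tauLetter] using congrArg (fun w : Lbl => w.2.2) (h j hj (by omega))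
  simp only [tauLetter, if_true] at first
  simp only [Prod.mk.injEq, true_and]
  omega

end Tau

section Images

variable {n : ℤ} {x y : ℤ × ℤ → WangTile Lbl} {A B : ℤ → ℤ}

/-- The vertical half of the description of the images of `x` under the substitution: row `l₂` of
`x` becomes the rows `B l₂ + j` of `y` for `0 ≤ j < n + 1 - rowType x l₂`, and the left label of
`x (l₁, l₂)` is spelled in column `A l₁`. -/
structure HasLeftWords (n : ℤ) (x y : ℤ × ℤ → WangTile Lbl) (A B : ℤ → ℤ) : Prop where
  succ_eq (l : ℤ) : B (l + 1) = B l + (n + 1 - rowType x l)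
  left_eq (l₁ l₂ j : ℤ) : 0 ≤ j → j < n + 1 - rowType x l₂ →
    (y (A l₁, B l₂ + j)).left = tauLetter n (x (l₁, l₂)).left j

/-- The left and bottom labels of `x` are spelled along the lower left sides of blocks of `y` with
corners `(A l₁, B l₂)`. If `y` is valid then so are the right and top labels, and `y` is an image of
`x` under the substitution, see `isOmegaImage_iff`. -/
structure HasWords (n : ℤ) (x y : ℤ × ℤ → WangTile Lbl) (A B : ℤ → ℤ) : Prop where
  left : HasLeftWords n x y A B
  bottom : HasLeftWords n (reflect x) (reflect y) B A

theorem leftWord_blockAt_eq_tau_iff (hn : 1 ≤ n) {v : Lbl} (hv : v ∈ Vn n) {a b b' : ℤ} :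
    leftWord (b' - b).toNat (BlockAt y a b) = tau n v ↔ b' = b + (n + 1 - v.1) ∧
      ∀ j, 0 ≤ j → j < n + 1 - v.1 → (y (a, b + j)).left = tauLetter n v j := by
  have := (eq_zero_or_one_of_mem_Vn hv).1
  rw [leftWord, map_range_eq_tau_iff hn hv,
    show ((b' - b).toNat : ℤ) = n + 1 - v.1 ↔ b' = b + (n + 1 - v.1) by omega,
    and_congr_right_iff]
  refine fun h => ⟨fun e j hj hj' => ?_, fun e j hj => ?_⟩
  · lift j to ℕ using hj
    simpa [BlockAt] using e j (by omega)
  · simpa [BlockAt] using e j (by omega) (by omega)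

theorem rightWord_blockAt_eq_leftWord_iff {a a' b : ℤ} {h : ℕ} (haa' : a < a') :
    rightWord (a' - a).toNat h (BlockAt y a b) = leftWord h (BlockAt y a' b) ↔
      ∀ j : ℕ, j < h → (y (a' - 1, b + j)).right = (y (a', b + j)).left := by
  have last : a + (((a' - a).toNat - 1 : ℕ) : ℤ) = a' - 1 := by omega
  simp [rightWord, leftWord, BlockAt, last]

namespace IsOmegaImage

variable {T : Set (WangTile Lbl)}

theorem reflect (h : IsOmegaImage n T x y A B) :
    IsOmegaImage n (hatT '' T) (reflect x) (reflect y) B A := by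
  refine ⟨h.2.1, h.1, fun l₁ l₂ => ?_⟩
  obtain ⟨⟨mem, horizontal, vertical⟩, right, top, left, bottom⟩ := h.2.2 l₂ l₁
  exact ⟨⟨fun i j hi hj => ⟨_, mem j i hj hi, rfl⟩, fun i j hi hj => vertical j i hj hi,
    fun i j hi hj => horizontal j i hj hi⟩, top, right, bottom, left⟩

theorem exists_block (h : IsOmegaImage n T x y A B) (a b : ℤ) :
    ∃ (l₁ l₂ : ℤ) (i j : ℕ), a = A l₁ + i ∧ b = B l₂ + j ∧
      i < (A (l₁ + 1) - A l₁).toNat ∧ j < (B (l₂ + 1) - B l₂).toNat := by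
  obtain ⟨l₁, hl₁, hl₁'⟩ := exists_le_lt_succ h.1 a
  obtain ⟨l₂, hl₂, hl₂'⟩ := exists_le_lt_succ h.2.1 b
  exact ⟨l₁, l₂, (a - A l₁).toNat, (b - B l₂).toNat, by omega, by omega, by omega, by omega⟩

theorem right_eq_left (h : IsOmegaImage n T x y A B)
    (hx : ∀ m : ℤ × ℤ, (x m).right = (x (m.1 + 1, m.2)).left) (a b : ℤ) :
    (y (a, b)).right = (y (a + 1, b)).left := by
  obtain ⟨l₁, l₂, i, j, rfl, rfl, hi, hj⟩ := h.exists_block a b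
  obtain ⟨⟨-, inside, -⟩, rightWord_eq, -⟩ := h.2.2 l₁ l₂
  obtain ⟨-, -, -, leftWord_eq, -⟩ := h.2.2 (l₁ + 1) l₂
  obtain hi' | hi' : i + 1 < (A (l₁ + 1) - A l₁).toNat ∨ A l₁ + i + 1 = A (l₁ + 1) := by omega
  · simpa [BlockAt, add_assoc] using inside i j hi' hj
  · rw [hx, ← leftWord_eq, rightWord_blockAt_eq_leftWord_iff (h.1 (lt_add_one l₁))] at rightWord_eq
    simpa [← hi'] using rightWord_eq j hj

theorem validConfig (h : IsOmegaImage n T x y A B) {T' : Set (WangTile Lbl)}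
    (hx : ValidConfig T' x) : ValidConfig T y := by
  refine ⟨fun ⟨a, b⟩ => ?_, fun _ => h.right_eq_left hx.2.1 _ _,
    fun _ => h.reflect.right_eq_left (fun _ => hx.2.2 _) _ _⟩
  obtain ⟨l₁, l₂, i, j, rfl, rfl, hi, hj⟩ := h.exists_block a b
  exact (h.2.2 l₁ l₂).1.1 i j hi hj

theorem hasLeftWords (hn : 1 ≤ n) (hx : ValidConfig (Text n) x)
    (h : IsOmegaImage n T x y A B) : HasLeftWords n x y A B := by
  have words (l₁ l₂ : ℤ) := (leftWord_blockAt_eq_tau_iff hn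
    (hx.transferLaw hn l₁ l₂).left_mem).1 (h.2.2 l₁ l₂).2.2.2.1
  simp only [hx.left_fst hn] at words
  exact ⟨fun l => (words 0 l).1, fun l₁ l₂ => (words l₁ l₂).2⟩

theorem hasWords (hn : 1 ≤ n) (hx : ValidConfig (Text n) x)
    (h : IsOmegaImage n T x y A B) : HasWords n x y A B :=
  ⟨h.hasLeftWords hn hx, h.reflect.hasLeftWords hn (hx.reflect hn)⟩

end IsOmegaImage

theorem HasLeftWords.leftWord_eq (hn : 1 ≤ n) (hx : ValidConfig (Text n) x)
    (h : HasLeftWords n x y A B) (l₁ l₂ : ℤ) :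
    leftWord (B (l₂ + 1) - B l₂).toNat (BlockAt y (A l₁) (B l₂)) = tau n (x (l₁, l₂)).left := by
  rw [leftWord_blockAt_eq_tau_iff hn (hx.transferLaw hn l₁ l₂).left_mem, hx.left_fst hn]
  exact ⟨h.succ_eq l₂, h.left_eq l₁ l₂⟩

theorem HasLeftWords.strictMono (hn : 1 ≤ n) (hx : ValidConfig (Text n) x)
    (h : HasLeftWords n x y A B) : StrictMono B :=
  strictMono_int_of_lt_succ fun l => by
    have := h.succ_eq l
    have := hx.rowType_eq_zero_or_one hn l
    omega

theorem HasLeftWords.rightWord_eq {T : Set (WangTile Lbl)} (hn : 1 ≤ n)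
    (hx : ValidConfig (Text n) x) (hy : ValidConfig T y) (hA : StrictMono A)
    (h : HasLeftWords n x y A B) (l₁ l₂ : ℤ) :
    rightWord (A (l₁ + 1) - A l₁).toNat (B (l₂ + 1) - B l₂).toNat (BlockAt y (A l₁) (B l₂)) =
      tau n (x (l₁, l₂)).right := by
  rw [hx.right_eq, ← h.leftWord_eq hn hx,
    rightWord_blockAt_eq_leftWord_iff (hA (lt_add_one l₁))]
  intro j _
  rw [hy.right_eq, sub_add_cancel]

theorem isOmegaImage_iff {T : Set (WangTile Lbl)} (hn : 1 ≤ n) (hx : ValidConfig (Text n) x) :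
    IsOmegaImage n T x y A B ↔ ValidConfig T y ∧ HasWords n x y A B := by
  refine ⟨fun h => ⟨h.validConfig hx, h.hasWords hn hx⟩, fun ⟨hy, left, bottom⟩ => ?_⟩
  have hx' := hx.reflect hn
  have hA := bottom.strictMono hn hx'
  have hB := left.strictMono hn hx
  exact ⟨hA, hB, fun l₁ l₂ => ⟨⟨fun _ _ _ _ => hy.1 _,
    fun i j _ _ => by simpa [BlockAt, add_assoc] using hy.right_eq (A l₁ + i) (B l₂ + j),
    fun i j _ _ => by simpa [BlockAt, add_assoc] using hy.top_eq (A l₁ + i) (B l₂ + j)⟩,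
    left.rightWord_eq hn hx hy hA l₁ l₂, bottom.rightWord_eq hn hx' hy.reflect_image hB l₂ l₁,
    left.leftWord_eq hn hx l₁ l₂, bottom.leftWord_eq hn hx' l₂ l₁⟩⟩

end Images

section Blocks

variable {n : ℤ} {t : WangTile Lbl} {i j : ℤ}

/-- The left label of the tile at position `(i, j)` of the block of `t`; for
`i = n + 1 - t.bottom.1` it is the right label of the last tile of row `j` of the block. -/
def innerLabel (n : ℤ) (t : WangTile Lbl) (i j : ℤ) : Lbl :=
  if i = 0 then tauLetter n t.left j
  else if j = 0 then
    (0, stepAt (t.bottom.2.2 - t.bottom.1) (i - 1), t.bottom.1 - t.bottom.2.1 + i)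
  else (1, 1, i + stepAt (t.left.2.2 - t.left.1) (j - 1))

/-- The tile at position `(i, j)` of the block of `t` under the substitution. -/
def blockTile (n : ℤ) (t : WangTile Lbl) (i j : ℤ) : WangTile Lbl where
  right := innerLabel n t (i + 1) j
  top := innerLabel n (hatT t) (j + 1) i
  left := innerLabel n t i j
  bottom := innerLabel n (hatT t) j i

theorem innerLabel_width (hn : 1 ≤ n) (ht : t ∈ Text n) (hj : 0 ≤ j) (hj' : j ≤ n - t.left.1) :
    innerLabel n t (n + 1 - t.bottom.1) j = tauLetter n t.right j := by
  obtain ⟨⟨hl, hr, hrl, hr₃, hl₃, hr₃'⟩, ⟨hb, ht, htb, ht₃, hb₃, ht₃'⟩⟩ := (mem_Text_iff hn).1 ht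
  simp only [hatT, Vn, Set.mem_ofPred_eq] at *
  have hu := hb.2.1.trans hb.2.2.1
  have hv := hl.2.1.trans hl.2.2.1
  rw [innerLabel, if_neg (by omega), tauLetter]
  simp only [stepAt]
  split_ifs <;> simp only [Prod.mk.injEq, true_and] <;> omega

theorem innerLabel_mem_Vn (hn : 1 ≤ n) (ht : t ∈ Text n) (hi : 0 ≤ i)
    (hi' : i ≤ n + 1 - t.bottom.1) (hj : 0 ≤ j) (hj' : j ≤ n - t.left.1) :
    innerLabel n t i j ∈ Vn n := by
  obtain ⟨⟨hl, hr, hrl, -, hl₃, hr₃'⟩, ⟨hb, ht, htb, ht₃, hb₃, ht₃'⟩⟩ := (mem_Text_iff hn).1 ht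
  simp only [hatT, Vn, Set.mem_ofPred_eq] at *
  simp only [innerLabel, tauLetter, stepAt]
  split_ifs <;> simp only <;> omega

theorem transferLaw_blockTile (hn : 1 ≤ n) (ht : t ∈ Text n) (hi : 0 ≤ i)
    (hi' : i ≤ n - t.bottom.1) (hj : 0 ≤ j) (hj' : j ≤ n - t.left.1) :
    TransferLaw n (blockTile n t i j) where
  left_mem := innerLabel_mem_Vn hn ht hi (by omega) hj hj'
  right_mem := innerLabel_mem_Vn hn ht (by omega) (by omega) hj hj'
  right_fst := by
    simp only [blockTile, innerLabel, tauLetter]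
    split_ifs <;> rfl
  right_third_of_one := by
    simp only [blockTile, innerLabel, tauLetter, hatT]
    split_ifs <;> simp only <;> omega
  left_third_of_zero := by
    simp only [blockTile, innerLabel, tauLetter, hatT, stepAt, show j + 1 ≠ 0 by omega, if_false,
      add_sub_cancel_right]
    split_ifs <;> simp only [implies_true] <;> omega
  right_third_of_zero := by
    simp only [blockTile, innerLabel, tauLetter, hatT, stepAt, show i + 1 ≠ 0 by omega, if_false]
    split_ifs <;> simp only <;> omega

theorem blockTile_mem_Text (hn : 1 ≤ n) (ht : t ∈ Text n) (hi : 0 ≤ i)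
    (hi' : i ≤ n - t.bottom.1) (hj : 0 ≤ j) (hj' : j ≤ n - t.left.1) :
    blockTile n t i j ∈ Text n :=
  (mem_Text_iff hn).2 ⟨transferLaw_blockTile hn ht hi hi' hj hj',
    transferLaw_blockTile hn (hatT_mem_Text hn ht) hj hj' hi hi'⟩

end Blocks

section ExistenceOfImages

variable {n : ℤ} {x : ℤ × ℤ → WangTile Lbl} {A B L K : ℤ → ℤ}

/-- The image of `x` under the substitution, where `A` and `B` list the boundaries of the blocks and
column `a`, row `b` belong to the blocks of index `L a`, `K b`. -/
def substConfig (n : ℤ) (x : ℤ × ℤ → WangTile Lbl) (A B L K : ℤ → ℤ) : ℤ × ℤ → WangTile Lbl :=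
  fun m => blockTile n (x (L m.1, K m.2)) (m.1 - A (L m.1)) (m.2 - B (K m.2))

/-- `A` lists the left ends of consecutive blocks whose widths are those of the images of the
columns of `x`, and `L a` is the index of the block containing `a`. -/
structure BlockIndex (n : ℤ) (x : ℤ × ℤ → WangTile Lbl) (A L : ℤ → ℤ) : Prop where
  strictMono : StrictMono A
  succ_eq (l : ℤ) : A (l + 1) = A l + (n + 1 - colType x l)
  le (a : ℤ) : A (L a) ≤ a
  lt (a : ℤ) : a < A (L a + 1)

theorem BlockIndex.eq_of_le_of_lt (h : BlockIndex n x A L) {a l : ℤ} (h₁ : A l ≤ a)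
    (h₂ : a < A (l + 1)) : L a = l :=
  eq_of_le_lt_succ h.strictMono (h.le a) (h.lt a) h₁ h₂

theorem exists_blockIndex (hn : 1 ≤ n) (hx : ValidConfig (Text n) x) :
    ∃ A L, A 0 = 0 ∧ BlockIndex n x A L := by
  obtain ⟨A, A_zero, A_succ⟩ := exists_succ_eq_add fun l => n + 1 - colType x l
  have hA : StrictMono A := strictMono_int_of_lt_succ fun l => by
    have := hx.colType_eq_zero_or_one hn l
    have := A_succ l
    omega
  choose L le lt using exists_le_lt_succ hA
  exact ⟨A, L, A_zero, hA, A_succ, le, lt⟩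

theorem substConfig_right_eq (hn : 1 ≤ n) (hx : ValidConfig (Text n) x) (hA : BlockIndex n x A L)
    (hB : BlockIndex n (reflect x) B K) (a b : ℤ) :
    (substConfig n x A B L K (a, b)).right = (substConfig n x A B L K (a + 1, b)).left := by
  have hb := hB.le b
  have hb' := hB.lt b
  have ha := hA.le a
  have ha' := hA.lt a
  simp only [substConfig, blockTile]
  obtain inside | boundary : a + 1 < A (L a + 1) ∨ a + 1 = A (L a + 1) := by omega
  · rw [hA.eq_of_le_of_lt (a := a + 1) (by omega) inside]
    ring_nf
  · have next : L (a + 1) = L a + 1 :=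
      hA.eq_of_le_of_lt boundary.ge (boundary.trans_lt (hA.strictMono (lt_add_one _)))
    have last : a - A (L a) + 1 = n + 1 - (x (L a, K b)).bottom.1 := by
      have := hA.succ_eq (L a)
      rw [hx.bottom_fst hn]
      omega
    have height : b - B (K b) ≤ n - (x (L a, K b)).left.1 := by
      have : B (K b + 1) = B (K b) + (n + 1 - rowType x (K b)) := hB.succ_eq (K b)
      rw [hx.left_fst hn]
      omega
    rw [last, innerLabel_width hn (hx.1 _) (by omega) height, next, boundary, sub_self,
      innerLabel, if_pos rfl, hx.right_eq]

theorem substConfig_mem_Text (hn : 1 ≤ n) (hx : ValidConfig (Text n) x) (hA : BlockIndex n x A L)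
    (hB : BlockIndex n (reflect x) B K) (a b : ℤ) : substConfig n x A B L K (a, b) ∈ Text n := by
  have := hB.le b
  have := hB.lt b
  have : B (K b + 1) = B (K b) + (n + 1 - rowType x (K b)) := hB.succ_eq (K b)
  have := hA.le a
  have := hA.lt a
  have := hA.succ_eq (L a)
  have hu := hx.bottom_fst hn (L a) (K b)
  have hv := hx.left_fst hn (L a) (K b)
  change blockTile n (x (L a, K b)) (a - A (L a)) (b - B (K b)) ∈ Text n
  exact blockTile_mem_Text hn (hx.1 _) (by omega) (by omega) (by omega) (by omega)

theorem hasLeftWords_substConfig (hA : BlockIndex n x A L) (hB : BlockIndex n (reflect x) B K) :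
    HasLeftWords n x (substConfig n x A B L K) A B where
  succ_eq := hB.succ_eq
  left_eq l₁ l₂ j hj hj' := by
    have : B (l₂ + 1) = B l₂ + (n + 1 - rowType x l₂) := hB.succ_eq l₂
    simp only [substConfig, blockTile]
    rw [hA.eq_of_le_of_lt le_rfl (hA.strictMono (lt_add_one l₁)),
      hB.eq_of_le_of_lt (a := B l₂ + j) (l := l₂) (by omega) (by omega), sub_self,
      add_sub_cancel_left, innerLabel, if_pos rfl]

theorem exists_substitution_image (hn : 1 ≤ n) (hx : ValidConfig (Text n) x) :
    ∃ y A B, A 0 = 0 ∧ B 0 = 0 ∧ ValidConfig (Text n) y ∧ HasWords n x y A B := by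
  have hx' := hx.reflect hn
  obtain ⟨A, L, A_zero, hA⟩ := exists_blockIndex hn hx
  obtain ⟨B, K, B_zero, hB⟩ := exists_blockIndex hn hx'
  exact ⟨substConfig n x A B L K, A, B, A_zero, B_zero,
    ⟨fun _ => substConfig_mem_Text hn hx hA hB _ _, fun _ => substConfig_right_eq hn hx hA hB _ _,
      fun _ => substConfig_right_eq hn hx' hB hA _ _⟩,
    hasLeftWords_substConfig hA hB, hasLeftWords_substConfig hB hA⟩

end ExistenceOfImages

section Desubstitution

variable {n : ℤ} {y : ℤ × ℤ → WangTile Lbl} {A B : ℤ → ℤ} {Z W : ℤ → ℤ → ℤ}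

/-- The type (`0` or `1`) of a column whose image under the substitution occupies the columns
`A l, …, A (l + 1) - 1`. -/
def gapType (n : ℤ) (A : ℤ → ℤ) (l : ℤ) : ℤ := n + 1 - (A (l + 1) - A l)

/-- The bits passed upwards in the lower left column of the block of index `(l₁, l₂)`, read from
bottom to top, are `Z l₁ l₂` zeros followed by ones. -/
structure IsThreshold (n : ℤ) (y : ℤ × ℤ → WangTile Lbl) (A B : ℤ → ℤ) (Z : ℤ → ℤ → ℤ) :
    Prop where
  nonneg (l₁ l₂ : ℤ) : 0 ≤ Z l₁ l₂
  le (l₁ l₂ : ℤ) : Z l₁ l₂ ≤ n - gapType n B l₂ + 1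
  upState_eq (l₁ l₂ j : ℤ) : 0 ≤ j → j ≤ n - gapType n B l₂ →
    upState y (A l₁) (B l₂ + j) = stepAt (Z l₁ l₂) j

/-- The left label of the tile whose image is the block of `y` of index `(l₁, l₂)`. -/
def parentLabel (n : ℤ) (y : ℤ × ℤ → WangTile Lbl) (A B : ℤ → ℤ) (Z : ℤ → ℤ → ℤ)
    (l₁ l₂ : ℤ) : Lbl :=
  (gapType n B l₂, gapType n B l₂ + 1 - rightState y (A l₁ - 1) (B l₂), gapType n B l₂ + Z l₁ l₂)

/-- The configuration whose image is `y`, where `Z` and `W` are the thresholds of `y` and of its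
mirror image. -/
def parentConfig (n : ℤ) (y : ℤ × ℤ → WangTile Lbl) (A B : ℤ → ℤ) (Z W : ℤ → ℤ → ℤ) :
    ℤ × ℤ → WangTile Lbl := fun l =>
  { right := parentLabel n y A B Z (l.1 + 1) l.2
    top := parentLabel n (reflect y) B A W (l.2 + 1) l.1
    left := parentLabel n y A B Z l.1 l.2
    bottom := parentLabel n (reflect y) B A W l.2 l.1 }

theorem gapType_eq_zero_or_one (hn : 1 ≤ n) (hy : ValidConfig (Text n) y) {l : ℤ}
    (hA : ConsecutiveZeros (colType y) (A l) (A (l + 1))) :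
    gapType n A l = 0 ∨ gapType n A l = 1 := by
  have := hy.gap_eq_or_eq_add_one hn hA
  rw [gapType]
  omega

theorem rowType_eq_one_of_mem_gap (hn : 1 ≤ n) (hy : ValidConfig (Text n) y) {l j : ℤ}
    (hB : ConsecutiveZeros (rowType y) (B l) (B (l + 1))) (hj : 1 ≤ j)
    (hj' : j ≤ n - gapType n B l) : rowType y (B l + j) = 1 := by
  rw [gapType] at hj'
  exact (hy.rowType_eq_zero_or_one hn _).resolve_left (hB.ne_zero _ (by omega) (by omega))

theorem exists_isThreshold (hn : 1 ≤ n) (hy : ValidConfig (Text n) y)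
    (hA : ∀ l, ConsecutiveZeros (colType y) (A l) (A (l + 1)))
    (hB : ∀ l, ConsecutiveZeros (rowType y) (B l) (B (l + 1))) :
    ∃ Z, IsThreshold n y A B Z := by
  have gap (l₂ : ℤ) : gapType n B l₂ = 0 ∨ gapType n B l₂ = 1 :=
    gapType_eq_zero_or_one hn (hy.reflect hn) (hB l₂)
  have mono (l₁ l₂ : ℤ) : MonotoneOn (fun j => upState y (A l₁) (B l₂ + j))
      (Set.Icc 0 (n - gapType n B l₂)) := by
    refine monotoneOn_of_le_add_one Set.ordConnected_Icc fun j _ ⟨hj, _⟩ ⟨_, hj'⟩ => ?_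
    have := hy.upState_le_upState_of_one hn (hA l₁).left_eq
      (rowType_eq_one_of_mem_gap hn hy (hB l₂) (by omega) hj')
    rwa [← add_assoc, add_sub_cancel_right, add_assoc] at this
  choose Z nonneg le upState_eq using fun l₁ l₂ =>
    exists_eq_stepAt (fun j => hy.upState_eq_zero_or_one hn (A l₁) (B l₂ + j)) (mono l₁ l₂)
      (by have := gap l₂; omega)
  exact ⟨Z, nonneg, le, upState_eq⟩

theorem upState_succ_add_gapType (hn : 1 ≤ n) (hy : ValidConfig (Text n) y) {l₁ : ℤ}
    (hA : ConsecutiveZeros (colType y) (A l₁) (A (l₁ + 1))) (b : ℤ) :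
    upState y (A (l₁ + 1)) b + gapType n A l₁ = upState y (A l₁) (b - 1) + rowType y b := by
  have := hy.upState_add_gap hn hA b
  rw [gapType]
  omega

theorem gapType_le_upState (hn : 1 ≤ n) (hy : ValidConfig (Text n) y) {l₁ b : ℤ}
    (hA : ConsecutiveZeros (colType y) (A l₁) (A (l₁ + 1))) (hb : rowType y b = 0) :
    gapType n A l₁ ≤ upState y (A l₁) (b - 1) := by
  have := upState_succ_add_gapType hn hy hA b
  have := hy.upState_eq_zero_or_one hn (A (l₁ + 1)) b
  omega

namespace IsThreshold

theorem upState_last (hZ : IsThreshold n y A B Z) (hn : 1 ≤ n) (hy : ValidConfig (Text n) y)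
    {l₁ l₂ : ℤ} (hB : ConsecutiveZeros (rowType y) (B l₂) (B (l₂ + 1))) :
    upState y (A l₁) (B (l₂ + 1) - 1) = stepAt (Z l₁ l₂) (n - gapType n B l₂) := by
  have := gapType_eq_zero_or_one hn (hy.reflect hn) hB
  rw [← hZ.upState_eq l₁ l₂ _ (by omega) le_rfl, gapType]
  ring_nf

theorem succ_eq_add_one (hZ : IsThreshold n y A B Z) (hn : 1 ≤ n) (hy : ValidConfig (Text n) y)
    (hA : ∀ l, ConsecutiveZeros (colType y) (A l) (A (l + 1)))
    (hB : ∀ l, ConsecutiveZeros (rowType y) (B l) (B (l + 1))) (l₁ l₂ : ℤ)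
    (hu : gapType n A l₁ = 1) : Z (l₁ + 1) l₂ = Z l₁ l₂ + 1 := by
  have nonneg := hZ.nonneg l₁ l₂
  have last := gapType_le_upState hn hy (hA l₁) (hB (l₂ + 1)).left_eq
  rw [hu, hZ.upState_last hn hy (hB l₂), stepAt] at last
  refine eq_of_stepAt_eq (hZ.nonneg _ _) (hZ.le _ _) (by omega) ?_ fun j hj hj' => ?_
  · split_ifs at last <;> omega
  · rw [← hZ.upState_eq _ _ j hj hj']
    have step := upState_succ_add_gapType hn hy (hA l₁) (B l₂ + j)
    obtain rfl | hj₁ : j = 0 ∨ 1 ≤ j := by omega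
    · have := hy.upState_eq_zero_or_one hn (A l₁) (B l₂ - 1)
      have := hy.upState_eq_zero_or_one hn (A (l₁ + 1)) (B l₂)
      rw [add_zero, (hB l₂).left_eq] at step
      rw [add_zero, stepAt, if_pos (by omega)]
      omega
    · rw [rowType_eq_one_of_mem_gap hn hy (hB l₂) hj₁ hj', add_sub_assoc, hu] at step
      rw [add_left_injective _ step, hZ.upState_eq _ _ _ (by omega) (by omega)]
      simp only [stepAt, sub_lt_iff_lt_add]

theorem eq_of_gapType_eq_zero (hZ : IsThreshold n y A B Z) (hn : 1 ≤ n)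
    (hy : ValidConfig (Text n) y)
    (hA : ∀ l, ConsecutiveZeros (colType y) (A l) (A (l + 1)))
    (hB : ∀ l, ConsecutiveZeros (rowType y) (B l) (B (l + 1))) (l₁ l₂ : ℤ)
    (hu : gapType n A l₁ = 0) :
    Z l₁ l₂ = n - gapType n B l₂ + 1 - upState y (A l₁) (B (l₂ + 1) - 1) ∧
      Z (l₁ + 1) l₂ = 1 - upState y (A l₁) (B l₂ - 1) := by
  have state (a b : ℤ) := hy.upState_eq_zero_or_one hn a b
  have gap : gapType n B l₂ = 0 ∨ gapType n B l₂ = 1 :=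
    gapType_eq_zero_or_one hn (hy.reflect hn) (hB l₂)
  have step (j : ℤ) := upState_succ_add_gapType hn hy (hA l₁) (B l₂ + j)
  have jump (j : ℤ) (hj : 1 ≤ j) (hj' : j ≤ n - gapType n B l₂) :
      upState y (A l₁) (B l₂ + (j - 1)) = 0 ∧ upState y (A (l₁ + 1)) (B l₂ + j) = 1 := by
    have := step j
    rw [rowType_eq_one_of_mem_gap hn hy (hB l₂) hj hj', add_sub_assoc] at this
    have := state (A l₁) (B l₂ + (j - 1))
    have := state (A (l₁ + 1)) (B l₂ + j)
    omega
  constructor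
  · have last := state (A l₁) (B (l₂ + 1) - 1)
    refine eq_of_stepAt_eq (hZ.nonneg _ _) (hZ.le _ _) (by omega) (by omega) fun j hj hj' => ?_
    obtain rfl | hj₁ : j = n - gapType n B l₂ ∨ j + 1 ≤ n - gapType n B l₂ := by omega
    · rw [← hZ.upState_last hn hy (hB l₂), stepAt]
      split_ifs <;> omega
    · have := (jump (j + 1) (by omega) hj₁).1
      rw [add_sub_cancel_right] at this
      rw [← hZ.upState_eq _ _ j hj hj', this, stepAt, if_pos (by omega)]
  · have first := state (A l₁) (B l₂ - 1)
    refine eq_of_stepAt_eq (N := n - gapType n B l₂) (hZ.nonneg _ _) (hZ.le _ _) (by omega)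
      (by omega) fun j hj hj' => ?_
    rw [← hZ.upState_eq _ _ j hj hj']
    obtain rfl | hj₁ : j = 0 ∨ 1 ≤ j := by omega
    · have := step 0
      rw [add_zero, (hB l₂).left_eq] at this
      rw [add_zero, stepAt]
      split_ifs <;> omega
    · rw [(jump j hj₁ hj').2, stepAt, if_neg (by omega)]

theorem parentLabel_mem_Vn (hZ : IsThreshold n y A B Z) (hn : 1 ≤ n)
    (hy : ValidConfig (Text n) y)
    (hA : ∀ l, ConsecutiveZeros (colType y) (A l) (A (l + 1)))
    (hB : ∀ l, ConsecutiveZeros (rowType y) (B l) (B (l + 1))) (l₁ l₂ : ℤ) :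
    parentLabel n y A B Z l₁ l₂ ∈ Vn n := by
  have gap : gapType n B l₂ = 0 ∨ gapType n B l₂ = 1 :=
    gapType_eq_zero_or_one hn (hy.reflect hn) (hB l₂)
  have gap_le : gapType n B l₂ ≤ rightState y (A l₁ - 1) (B l₂) :=
    gapType_le_upState hn (hy.reflect hn) (hB l₂) (hA l₁).left_eq
  have one_le : 1 - rightState y (A l₁ - 1) (B l₂) ≤ Z l₁ l₂ := by
    have := hy.upState_le_rightState_add_colType hn (hB l₂).left_eq (A l₁)
    have first := hZ.upState_eq l₁ l₂ 0 le_rfl (by omega)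
    have := hZ.nonneg l₁ l₂
    rw [add_zero, stepAt] at first
    have := (hA l₁).left_eq
    split_ifs at first <;> omega
  have := hy.rightState_eq_zero_or_one hn (A l₁ - 1) (B l₂)
  have := hZ.nonneg l₁ l₂
  have := hZ.le l₁ l₂
  simp only [Vn, parentLabel, Set.mem_ofPred_eq]
  omega

theorem transferLaw_parentConfig (hZ : IsThreshold n y A B Z) (hn : 1 ≤ n)
    (hy : ValidConfig (Text n) y)
    (hA : ∀ l, ConsecutiveZeros (colType y) (A l) (A (l + 1)))
    (hB : ∀ l, ConsecutiveZeros (rowType y) (B l) (B (l + 1))) (l₁ l₂ : ℤ) :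
    TransferLaw n (parentConfig n y A B Z W (l₁, l₂)) where
  left_mem := hZ.parentLabel_mem_Vn hn hy hA hB l₁ l₂
  right_mem := hZ.parentLabel_mem_Vn hn hy hA hB (l₁ + 1) l₂
  right_fst := rfl
  right_third_of_one hu := by
    have := hZ.succ_eq_add_one hn hy hA hB l₁ l₂ hu
    simp only [parentConfig, parentLabel]
    omega
  left_third_of_zero hu := by
    have := (hZ.eq_of_gapType_eq_zero hn hy hA hB l₁ l₂ hu).1
    change gapType n A l₁ = 0 at hu
    change gapType n B l₂ + Z l₁ l₂ =
      n + (gapType n A l₁ + 1 - upState y (A l₁) (B (l₂ + 1) - 1))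
    omega
  right_third_of_zero hu := by
    have := (hZ.eq_of_gapType_eq_zero hn hy hA hB l₁ l₂ hu).2
    change gapType n A l₁ = 0 at hu
    change gapType n B l₂ + Z (l₁ + 1) l₂ =
      gapType n A l₁ + 1 - upState y (A l₁) (B l₂ - 1) + gapType n B l₂
    omega

theorem hasLeftWords_parentConfig (hZ : IsThreshold n y A B Z) (hn : 1 ≤ n)
    (hy : ValidConfig (Text n) y) (hA : ∀ l, colType y (A l) = 0)
    (hB : ∀ l, ConsecutiveZeros (rowType y) (B l) (B (l + 1))) :
    HasLeftWords n (parentConfig n y A B Z W) y A B where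
  succ_eq l := by
    change _ = B l + (n + 1 - gapType n B l)
    rw [gapType]
    ring
  left_eq l₁ l₂ j hj hj' := by
    change j < n + 1 - gapType n B l₂ at hj'
    have law := hy.transferLaw hn (A l₁) (B l₂ + j)
    have fst := hy.left_fst hn (A l₁) (B l₂ + j)
    have third := law.left_third_of_zero ((hy.bottom_fst hn _ _).trans (hA l₁))
    change _ = n + upState y (A l₁) (B l₂ + j) at third
    rw [hZ.upState_eq _ _ _ hj (by omega)] at third
    change _ = tauLetter n (parentLabel n y A B Z l₁ l₂) j
    simp only [tauLetter, parentLabel, add_sub_cancel_left]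
    split_ifs with hj₀
    · subst hj₀
      have second := hy.left_snd (A l₁) (B l₂ + 0)
      rw [add_zero] at *
      exact Prod.ext (fst.trans (hB l₂).left_eq) (Prod.ext (second.trans (by ring)) third)
    · rw [rowType_eq_one_of_mem_gap hn hy (hB l₂) (by omega) (by omega)] at fst
      obtain ⟨-, h₁, h₂, -⟩ := law.left_mem
      exact Prod.ext fst (Prod.ext (show _ = (1 : ℤ) by omega) third)

end IsThreshold

theorem exists_desubstitution (hn : 1 ≤ n) (hy : ValidConfig (Text n) y) :
    ∃ x A B, ValidConfig (Text n) x ∧ HasWords n x y A B := by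
  have hy' := hy.reflect hn
  obtain ⟨A, mono_A, range_A⟩ := hy.exists_strictMono_range_eq_zeros hn
  obtain ⟨B, mono_B, range_B⟩ := hy'.exists_strictMono_range_eq_zeros hn
  have hA := consecutiveZeros_of_range_eq mono_A range_A
  have hB : ∀ l, ConsecutiveZeros (rowType y) (B l) (B (l + 1)) :=
    consecutiveZeros_of_range_eq mono_B range_B
  obtain ⟨Z, hZ⟩ := exists_isThreshold hn hy hA hB
  obtain ⟨W, hW⟩ := exists_isThreshold hn hy' hB hA
  exact ⟨parentConfig n y A B Z W, A, B,
    ⟨fun m => (mem_Text_iff hn).2 ⟨hZ.transferLaw_parentConfig hn hy hA hB m.1 m.2,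
      hW.transferLaw_parentConfig hn hy' hB hA m.2 m.1⟩, fun _ => rfl, fun _ => rfl⟩,
    hZ.hasLeftWords_parentConfig hn hy (fun l => (hA l).left_eq) hB,
    hW.hasLeftWords_parentConfig hn hy' (fun l => (hB l).left_eq) hA⟩

end Desubstitution

section Recognizability

variable {n : ℤ} {x x' y : ℤ × ℤ → WangTile Lbl} {A A' B B' : ℤ → ℤ}

theorem validConfig_translate_iff {C : Type*} {T : Set (WangTile C)} {y : ℤ × ℤ → WangTile C}
    (k : ℤ × ℤ) : ValidConfig T (fun m => y (m.1 - k.1, m.2 - k.2)) ↔ ValidConfig T y := by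
  have translate {y : ℤ × ℤ → WangTile C} (hy : ValidConfig T y) (k : ℤ × ℤ) :
      ValidConfig T fun m => y (m.1 - k.1, m.2 - k.2) :=
    ⟨fun _ => hy.1 _, fun m => by simpa [sub_add_eq_add_sub] using hy.2.1 (m.1 - k.1, m.2 - k.2),
      fun m => by simpa [sub_add_eq_add_sub] using hy.2.2 (m.1 - k.1, m.2 - k.2)⟩
  exact ⟨fun h => by simpa using translate h (-k), fun h => translate h k⟩

theorem hasLeftWords_translate_iff (k : ℤ × ℤ) :
    HasLeftWords n x (fun m => y (m.1 - k.1, m.2 - k.2)) A B ↔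
      HasLeftWords n x y (fun l => A l - k.1) fun l => B l - k.2 := by
  have succ_eq_iff (l : ℤ) : B (l + 1) = B l + (n + 1 - rowType x l) ↔
      B (l + 1) - k.2 = B l - k.2 + (n + 1 - rowType x l) := by omega
  have corner (l₁ l₂ j : ℤ) :
      y (A l₁ - k.1, B l₂ + j - k.2) = y (A l₁ - k.1, B l₂ - k.2 + j) := by rw [sub_add_eq_add_sub]
  constructor
  · exact fun h => ⟨fun l => (succ_eq_iff l).1 (h.succ_eq l), fun l₁ l₂ j hj hj' =>
      (congrArg WangTile.left (corner l₁ l₂ j)).symm.trans (h.left_eq l₁ l₂ j hj hj')⟩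
  · exact fun h => ⟨fun l => (succ_eq_iff l).2 (h.succ_eq l), fun l₁ l₂ j hj hj' =>
      (congrArg WangTile.left (corner l₁ l₂ j)).trans (h.left_eq l₁ l₂ j hj hj')⟩

theorem hasWords_translate_iff (k : ℤ × ℤ) :
    HasWords n x (fun m => y (m.1 - k.1, m.2 - k.2)) A B ↔
      HasWords n x y (fun l => A l - k.1) fun l => B l - k.2 :=
  ⟨fun h => ⟨(hasLeftWords_translate_iff k).1 h.left,
      (hasLeftWords_translate_iff k.swap).1 h.bottom⟩,
    fun h => ⟨(hasLeftWords_translate_iff k).2 h.left,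
      (hasLeftWords_translate_iff k.swap).2 h.bottom⟩⟩

namespace HasLeftWords

theorem range_eq (h : HasLeftWords n x y A B) (hn : 1 ≤ n) (hx : ValidConfig (Text n) x)
    (hy : ValidConfig (Text n) y) : Set.range B = {b | rowType y b = 0} := by
  ext b
  obtain ⟨l, hl, hl'⟩ := exists_le_lt_succ (h.strictMono hn hx) b
  rw [h.succ_eq] at hl'
  have letter : rowType y b = if b - B l = 0 then 0 else 1 := by
    have := h.left_eq 0 l (b - B l) (by omega) (by omega)
    rw [add_sub_cancel] at this
    rw [← hy.left_fst hn (A 0), this, tauLetter]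
  rw [Set.mem_ofPred_eq, letter]
  constructor
  · rintro ⟨l', rfl⟩
    have : l = l' := eq_of_le_lt_succ (h.strictMono hn hx) hl (by rwa [h.succ_eq]) le_rfl
      (h.strictMono hn hx (lt_add_one l'))
    rw [this, sub_self, if_pos rfl]
  · intro hb
    exact ⟨l, by split_ifs at hb <;> omega⟩

theorem boundaries_eq (h : HasLeftWords n x y A B) (h' : HasLeftWords n x' y A' B') (hn : 1 ≤ n)
    (hx : ValidConfig (Text n) x) (hx' : ValidConfig (Text n) x') (hy : ValidConfig (Text n) y)
    (hB : B 0 ≤ 0 ∧ 0 < B 0 + (n + 1 - rowType x 0))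
    (hB' : B' 0 ≤ 0 ∧ 0 < B' 0 + (n + 1 - rowType x' 0)) : B = B' := by
  rw [← h.succ_eq] at hB
  rw [← h'.succ_eq] at hB'
  exact eq_of_range_eq (h.strictMono hn hx) (h'.strictMono hn hx')
    ((h.range_eq hn hx hy).trans (h'.range_eq hn hx' hy).symm) hB.1 hB.2 hB'.1 hB'.2

theorem parent_left_eq (h : HasLeftWords n x y A B) (h' : HasLeftWords n x' y A B) (hn : 1 ≤ n)
    (hx : ValidConfig (Text n) x) (hx' : ValidConfig (Text n) x') (l₁ l₂ : ℤ) :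
    (x (l₁, l₂)).left = (x' (l₁, l₂)).left := by
  have type_eq : rowType x l₂ = rowType x' l₂ := by
    have := h.succ_eq l₂
    have := h'.succ_eq l₂
    omega
  refine eq_of_tauLetter_eq hn (hx.transferLaw hn _ _).left_mem (hx'.transferLaw hn _ _).left_mem
    (by rw [hx.left_fst hn, hx'.left_fst hn, type_eq]) fun j hj hj' => ?_
  rw [hx.left_fst hn] at hj'
  rw [← h.left_eq l₁ l₂ j hj hj', h'.left_eq l₁ l₂ j hj (type_eq ▸ hj')]

end HasLeftWords

theorem HasWords.parent_eq (h : HasWords n x y A B) (h' : HasWords n x' y A B) (hn : 1 ≤ n)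
    (hx : ValidConfig (Text n) x) (hx' : ValidConfig (Text n) x') : x = x' := by
  have left_eq := h.left.parent_left_eq h'.left hn hx hx'
  have bottom_eq (l₁ l₂ : ℤ) : (x (l₁, l₂)).bottom = (x' (l₁, l₂)).bottom :=
    h.bottom.parent_left_eq h'.bottom hn (hx.reflect hn) (hx'.reflect hn) l₂ l₁
  funext ⟨l₁, l₂⟩
  have right_eq : (x (l₁, l₂)).right = (x' (l₁, l₂)).right := by
    rw [hx.right_eq, hx'.right_eq, left_eq]
  have top_eq : (x (l₁, l₂)).top = (x' (l₁, l₂)).top := by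
    rw [hx.top_eq, hx'.top_eq, bottom_eq]
  calc x (l₁, l₂)
      = ⟨(x (l₁, l₂)).right, (x (l₁, l₂)).top, (x (l₁, l₂)).left, (x (l₁, l₂)).bottom⟩ := rfl
    _ = x' (l₁, l₂) := by rw [right_eq, top_eq, left_eq, bottom_eq]

theorem ValidConfig.length_tau_left (hn : 1 ≤ n) (hx : ValidConfig (Text n) x) (a b : ℤ) :
    ((tau n (x (a, b)).left).length : ℤ) = n + 1 - rowType x b := by
  rw [length_tau hn (hx.transferLaw hn a b).left_mem, hx.left_fst hn]

theorem ValidConfig.length_tau_bottom (hn : 1 ≤ n) (hx : ValidConfig (Text n) x) (a b : ℤ) :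
    ((tau n (x (a, b)).bottom).length : ℤ) = n + 1 - colType x a :=
  (hx.reflect hn).length_tau_left hn b a

theorem isOmegaImage_Tmet_iff (hn : 1 ≤ n) (hx : ValidConfig (Text n) x) :
    IsOmegaImage n (Tmet n) x y A B ↔ ValidConfig (Text n) y ∧ HasWords n x y A B := by
  rw [isOmegaImage_iff hn hx, validConfig_Tmet_iff hn]

theorem exists_desubstitution_origin (hn : 1 ≤ n) (hy : ValidConfig (Text n) y) :
    ∃ (x : ℤ × ℤ → WangTile Lbl) (k : ℤ × ℤ) (A B : ℤ → ℤ), ValidConfig (Text n) x ∧ A 0 = 0 ∧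
      B 0 = 0 ∧ HasWords n x (fun m => y (m.1 - k.1, m.2 - k.2)) A B := by
  obtain ⟨x, A, B, hx, words⟩ := exists_desubstitution hn hy
  refine ⟨x, (-A 0, -B 0), fun l => A l - A 0, fun l => B l - B 0, hx, sub_self _, sub_self _, ?_⟩
  rw [hasWords_translate_iff]
  simpa using words

theorem HasWords.recognizable {k k' : ℤ × ℤ} (hn : 1 ≤ n) (hx : ValidConfig (Text n) x)
    (hx' : ValidConfig (Text n) x') (hy : ValidConfig (Text n) y)
    (h : HasWords n x (fun m => y (m.1 - k.1, m.2 - k.2)) A B)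
    (h' : HasWords n x' (fun m => y (m.1 - k'.1, m.2 - k'.2)) A' B')
    (hA : A 0 = 0) (hB : B 0 = 0) (hA' : A' 0 = 0) (hB' : B' 0 = 0)
    (hk₁ : k.1 ∈ Set.Ico 0 (n + 1 - colType x 0)) (hk₂ : k.2 ∈ Set.Ico 0 (n + 1 - rowType x 0))
    (hk₁' : k'.1 ∈ Set.Ico 0 (n + 1 - colType x' 0))
    (hk₂' : k'.2 ∈ Set.Ico 0 (n + 1 - rowType x' 0)) : x = x' ∧ k = k' := by
  rw [hasWords_translate_iff] at h h'
  have straddles {a k w : ℤ} (ha : a = 0) (hk : k ∈ Set.Ico 0 w) : a - k ≤ 0 ∧ 0 < a - k + w := by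
    have := hk.1
    have := hk.2
    omega
  have columns : (fun l => A l - k.1) = fun l => A' l - k'.1 :=
    h.bottom.boundaries_eq h'.bottom hn (hx.reflect hn) (hx'.reflect hn) (hy.reflect hn)
      (straddles hA hk₁) (straddles hA' hk₁')
  have rows : (fun l => B l - k.2) = fun l => B' l - k'.2 :=
    h.left.boundaries_eq h'.left hn hx hx' hy (straddles hB hk₂) (straddles hB' hk₂')
  have k_fst : A 0 - k.1 = A' 0 - k'.1 := congrFun columns 0
  have k_snd : B 0 - k.2 = B' 0 - k'.2 := congrFun rows 0
  rw [rows, columns] at h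
  exact ⟨h.parent_eq h' hn hx hx', Prod.ext (by omega) (by omega)⟩

end Recognizability

/-- the substitution `ω_n` maps `Ω_n` into `Ω_n`, is onto up to a shift
(so `Ω_n` is self-similar), and is recognizable in `Ω_n`. -/
theorem stmt15 (n : ℤ) (hn : 1 ≤ n) :
    (∀ x : ℤ × ℤ → WangTile Lbl, ValidConfig (Tmet n) x →
      (∃ (y : ℤ × ℤ → WangTile Lbl) (A B : ℤ → ℤ), A 0 = 0 ∧ B 0 = 0 ∧
        IsOmegaImage n (Tmet n) x y A B) ∧
      (∀ (y : ℤ × ℤ → WangTile Lbl) (A B : ℤ → ℤ), A 0 = 0 → B 0 = 0 →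
        IsOmegaImage n (Tmet n) x y A B → ValidConfig (Tmet n) y)) ∧
    (∀ y : ℤ × ℤ → WangTile Lbl, ValidConfig (Tmet n) y ↔
      ∃ (x : ℤ × ℤ → WangTile Lbl) (k : ℤ × ℤ) (A B : ℤ → ℤ),
        ValidConfig (Tmet n) x ∧ A 0 = 0 ∧ B 0 = 0 ∧
        IsOmegaImage n (Tmet n) x (fun m : ℤ × ℤ => y (m.1 - k.1, m.2 - k.2)) A B) ∧
    (∀ (x x' : ℤ × ℤ → WangTile Lbl) (k k' : ℤ × ℤ),
      ValidConfig (Tmet n) x → ValidConfig (Tmet n) x' →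
      0 ≤ k.1 → k.1 < ((tau n (x (0, 0)).bottom).length : ℤ) →
      0 ≤ k.2 → k.2 < ((tau n (x (0, 0)).left).length : ℤ) →
      0 ≤ k'.1 → k'.1 < ((tau n (x' (0, 0)).bottom).length : ℤ) →
      0 ≤ k'.2 → k'.2 < ((tau n (x' (0, 0)).left).length : ℤ) →
      ∀ (y : ℤ × ℤ → WangTile Lbl) (A B A' B' : ℤ → ℤ),
        A 0 = 0 → B 0 = 0 → A' 0 = 0 → B' 0 = 0 →
        IsOmegaImage n (Tmet n) x (fun m : ℤ × ℤ => y (m.1 - k.1, m.2 - k.2)) A B →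
        IsOmegaImage n (Tmet n) x' (fun m : ℤ × ℤ => y (m.1 - k'.1, m.2 - k'.2)) A' B' →
        x = x' ∧ k = k') := by
  simp only [validConfig_Tmet_iff hn]
  refine ⟨fun x hx => ⟨?_, fun y A B _ _ h => ((isOmegaImage_Tmet_iff hn hx).1 h).1⟩,
    fun y => ⟨fun hy => ?_, ?_⟩, ?_⟩
  · obtain ⟨y, A, B, hA, hB, image⟩ := exists_substitution_image hn hx
    exact ⟨y, A, B, hA, hB, (isOmegaImage_Tmet_iff hn hx).2 image⟩
  · obtain ⟨x, k, A, B, hx, hA, hB, words⟩ := exists_desubstitution_origin hn hy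
    exact ⟨x, k, A, B, hx, hA, hB,
      (isOmegaImage_Tmet_iff hn hx).2 ⟨(validConfig_translate_iff k).2 hy, words⟩⟩
  · rintro ⟨x, k, A, B, hx, -, -, h⟩
    exact (validConfig_translate_iff k).1 ((isOmegaImage_Tmet_iff hn hx).1 h).1
  · intro x x' k k' hx hx' h₁ h₁_lt h₂ h₂_lt h₁' h₁'_lt h₂' h₂'_lt y A B A' B' hA hB hA' hB' h h'
    rw [hx.length_tau_bottom hn] at h₁_lt
    rw [hx.length_tau_left hn] at h₂_lt
    rw [hx'.length_tau_bottom hn] at h₁'_lt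
    rw [hx'.length_tau_left hn] at h₂'_lt
    obtain ⟨hy, words⟩ := (isOmegaImage_Tmet_iff hn hx).1 h
    obtain ⟨-, words'⟩ := (isOmegaImage_Tmet_iff hn hx').1 h'
    exact words.recognizable hn hx hx' ((validConfig_translate_iff k).1 hy) words' hA hB hA' hB'
      ⟨h₁, h₁_lt⟩ ⟨h₂, h₂_lt⟩ ⟨h₁', h₁'_lt⟩ ⟨h₂', h₂'_lt⟩
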